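/- Let L be a completely distributive complete lattice. Then for every family (a_k)_{k ∈ K} in L the closure of ⋃_{k ∈ K} Q_{a_k}(L) in the Stone spectrum Q(L) equals Q_{⋁_{k ∈ K} a_k}(L); consequently the Stone spectrum Q(L) is extremally disconnected (the closure of every open set is open). -/

import Mathlib

/-- A filter base in an ordered set `L` with least element `⊥`:
a nonempty subset not containing `⊥` in which any two elements have a common lower bound. -/
def IsFilterBase {L : Type*} [PartialOrder L] [OrderBot L] (B : Set L) : Prop :=
  B.Nonempty ∧ ⊥ ∉ B ∧ ∀ a ∈ B, ∀ b ∈ B, ∃ c ∈ B, c ≤ a ∧ c ≤ b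

/-- A quasipoint is a maximal filter base. -/
def IsQuasipoint {L : Type*} [PartialOrder L] [OrderBot L] (B : Set L) : Prop :=
  IsFilterBase B ∧ ∀ C : Set L, IsFilterBase C → B ⊆ C → C = B

/-- The set of quasipoints of `L`. -/
def Quasipoint (L : Type*) [PartialOrder L] [OrderBot L] : Type _ :=
  {B : Set L // IsQuasipoint B}

/-- The basic (cl)open set of the Stone spectrum determined by `a : L`. -/
def Qset {L : Type*} [PartialOrder L] [OrderBot L] (a : L) : Set (Quasipoint L) :=
  {B | a ∈ B.1}

/-- The Stone topology on the set of quasipoints, generated by the sets `Qset a`. -/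
instance {L : Type*} [PartialOrder L] [OrderBot L] : TopologicalSpace (Quasipoint L) :=
  TopologicalSpace.generateFrom (Set.range (Qset : L → Set (Quasipoint L)))

/-
Write `B` for a quasipoint. Maximality of `B` means that `a ∈ B` as soon as `a` meets every element
of `B`, and by Zorn's lemma the basic open sets `Qset a` and `Qset b` intersect exactly when `a` and
`b` do. Hence `B` lies in the closure of `⋃ k, Qset (a k)` iff every `b ∈ B` meets some `a k`, and
it lies in `Qset (⨆ k, a k)` iff every `b ∈ B` meets `⨆ k, a k`. These conditions agree: an element
`b` disjoint from all `a k` has a pseudocomplement above every `a k`, hence above their supremum.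
Every open set is a union of sets `Qset a`, so its closure is again one of these open sets.
-/

open Set TopologicalSpace

section PartialOrder

variable {L : Type*} [PartialOrder L] [OrderBot L] {B : Set L} {a b : L}

theorem isFilterBase_singleton (ha : a ≠ ⊥) : IsFilterBase {a} :=
  ⟨singleton_nonempty a, ha.symm, directedOn_singleton (r := (· ≥ ·)) a⟩

theorem IsFilterBase.sUnion {S : Set (Set L)} (hne : S.Nonempty) (hS : DirectedOn (· ⊆ ·) S)
    (h : ∀ B ∈ S, IsFilterBase B) : IsFilterBase (⋃₀ S) := by
  refine ⟨?_, ?_, directedOn_sUnion (r := (· ≥ ·)) hS fun B hB => (h B hB).2.2⟩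
  · obtain ⟨B, hB⟩ := hne
    exact (h B hB).1.mono (subset_sUnion_of_mem hB)
  · rintro ⟨B, hB, hbot⟩
    exact (h B hB).2.1 hbot

theorem IsFilterBase.upperClosure (hB : IsFilterBase B) :
    IsFilterBase (upperClosure B : Set L) := by
  obtain ⟨hne, hbot, hdir⟩ := hB
  refine ⟨hne.mono subset_upperClosure, ?_, ?_⟩
  · rintro ⟨b, hb, hle⟩
    exact hbot (le_bot_iff.1 hle ▸ hb)
  · rintro x ⟨b, hb, hbx⟩ y ⟨c, hc, hcy⟩
    obtain ⟨d, hd, hdb, hdc⟩ := hdir b hb c hc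
    exact ⟨d, subset_upperClosure hd, hdb.trans hbx, hdc.trans hcy⟩

theorem IsFilterBase.not_disjoint (hB : IsFilterBase B) (ha : a ∈ B) (hb : b ∈ B) :
    ¬Disjoint a b := by
  intro hab
  obtain ⟨c, hc, hca, hcb⟩ := hB.2.2 a ha b hb
  exact hB.2.1 (le_bot_iff.1 (hab hca hcb) ▸ hc)

theorem IsFilterBase.exists_quasipoint_superset (hB : IsFilterBase B) :
    ∃ Q : Quasipoint L, B ⊆ Q.1 := by
  obtain ⟨M, hBM, hM⟩ := zorn_subset_nonempty {C : Set L | IsFilterBase C}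
    (fun c hc hchain hne =>
      ⟨⋃₀ c, .sUnion hne hchain.directedOn hc, fun _ => subset_sUnion_of_mem⟩) B hB
  exact ⟨⟨M, hM.prop, fun C hC hMC => (hM.eq_of_subset hC hMC).symm⟩, hBM⟩

theorem IsQuasipoint.isUpperSet (hB : IsQuasipoint B) : IsUpperSet B :=
  hB.2 _ hB.1.upperClosure subset_upperClosure ▸ (upperClosure B).upper

theorem Qset_mono : Monotone (Qset : L → Set (Quasipoint L)) :=
  fun _ _ hab B ha => B.2.isUpperSet hab ha

theorem Qset_nonempty (ha : a ≠ ⊥) : (Qset a).Nonempty := by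
  obtain ⟨B, hB⟩ := (isFilterBase_singleton ha).exists_quasipoint_superset
  exact ⟨B, hB rfl⟩

theorem disjoint_Qset_iff : Disjoint (Qset a) (Qset b) ↔ Disjoint a b := by
  refine ⟨fun h c hca hcb => ?_, fun h => disjoint_left.2 fun B ha hb => B.2.1.not_disjoint ha hb h⟩
  by_contra hc
  obtain ⟨B, hB⟩ := Qset_nonempty fun h0 => hc h0.le
  exact disjoint_left.1 h (Qset_mono hca hB) (Qset_mono hcb hB)

theorem isTopologicalBasis_range_Qset :
    IsTopologicalBasis (range (Qset : L → Set (Quasipoint L))) where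
  exists_subset_inter := by
    rintro _ ⟨a, rfl⟩ _ ⟨b, rfl⟩ B ⟨ha, hb⟩
    obtain ⟨c, hc, hca, hcb⟩ := B.2.1.2.2 a ha b hb
    exact ⟨Qset c, mem_range_self c, hc, subset_inter (Qset_mono hca) (Qset_mono hcb)⟩
  sUnion_eq := eq_univ_of_forall fun B =>
    let ⟨a, ha⟩ := B.2.1.1
    ⟨Qset a, mem_range_self a, ha⟩
  eq_generateFrom := rfl

theorem isOpen_Qset (a : L) : IsOpen (Qset a) :=
  isTopologicalBasis_range_Qset.isOpen (mem_range_self a)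

theorem mem_closure_iUnion_Qset_iff {K : Sort*} {a : K → L} {B : Quasipoint L} :
    B ∈ closure (⋃ k, Qset (a k)) ↔ ∀ b ∈ B.1, ∃ k, ¬Disjoint (a k) b := by
  have meets_iff (b : L) :
      (Qset b ∩ ⋃ k, Qset (a k)).Nonempty ↔ ∃ k, ¬Disjoint (a k) b := by
    simp only [← not_disjoint_iff_nonempty_inter, disjoint_iUnion_right, disjoint_Qset_iff,
      not_forall, disjoint_comm]
  simp only [isTopologicalBasis_range_Qset.mem_closure_iff, forall_mem_range, meets_iff]
  rfl

/-- Every element `b` has a pseudocomplement, a largest element disjoint from `b`. This is a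
property of the order, so the pseudocomplement is not chosen as data. -/
def IsPseudocomplemented (L : Type*) [PartialOrder L] [OrderBot L] : Prop :=
  ∀ b : L, ∃ c, IsGreatest {a | Disjoint a b} c

theorem IsPseudocomplemented.disjoint_iff_of_isLUB (hL : IsPseudocomplemented L) {S : Set L}
    {s : L} (hs : IsLUB S s) : Disjoint s b ↔ ∀ a ∈ S, Disjoint a b := by
  refine ⟨fun h a ha => h.mono_left (hs.1 ha), fun h => ?_⟩
  obtain ⟨c, hcb, hc⟩ := hL b
  exact hcb.mono_left (hs.2 fun a ha => hc (h a ha))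

end PartialOrder

theorem isPseudocomplemented_of_heytingAlgebra (L : Type*) [HeytingAlgebra L] :
    IsPseudocomplemented L :=
  fun b => ⟨bᶜ, isGreatest_compl b⟩

section SemilatticeInf

variable {L : Type*} [SemilatticeInf L] [OrderBot L] {B : Set L} {a : L}

theorem IsFilterBase.image_inf (hB : IsFilterBase B) (ha : ∀ b ∈ B, ¬Disjoint a b) :
    IsFilterBase ((a ⊓ ·) '' B) := by
  obtain ⟨hne, -, hdir⟩ := hB
  refine ⟨hne.image _, ?_, ?_⟩
  · rintro ⟨b, hb, hab⟩
    exact ha b hb (disjoint_iff.2 hab)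
  · rintro _ ⟨b, hb, rfl⟩ _ ⟨c, hc, rfl⟩
    obtain ⟨d, hd, hdb, hdc⟩ := hdir b hb c hc
    exact ⟨a ⊓ d, mem_image_of_mem _ hd, inf_le_inf_left a hdb, inf_le_inf_left a hdc⟩

theorem IsQuasipoint.mem_iff_forall_not_disjoint (hB : IsQuasipoint B) :
    a ∈ B ↔ ∀ b ∈ B, ¬Disjoint a b := by
  refine ⟨fun ha b hb => hB.1.not_disjoint ha hb, fun h => ?_⟩
  have hC : (upperClosure ((a ⊓ ·) '' B) : Set L) = B :=
    hB.2 _ (hB.1.image_inf h).upperClosure fun b hb => ⟨a ⊓ b, mem_image_of_mem _ hb, inf_le_right⟩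
  obtain ⟨b, hb⟩ := hB.1.1
  exact hC.subset ⟨a ⊓ b, mem_image_of_mem _ hb, inf_le_left⟩

theorem IsPseudocomplemented.closure_iUnion_Qset (hL : IsPseudocomplemented L) {K : Sort*}
    {a : K → L} {s : L} (hs : IsLUB (range a) s) : closure (⋃ k, Qset (a k)) = Qset s := by
  ext B
  calc B ∈ closure (⋃ k, Qset (a k))
      ↔ ∀ b ∈ B.1, ∃ k, ¬Disjoint (a k) b := mem_closure_iUnion_Qset_iff
    _ ↔ ∀ b ∈ B.1, ¬Disjoint s b := by
      simp only [hL.disjoint_iff_of_isLUB hs, forall_mem_range, not_forall]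
    _ ↔ B ∈ Qset s := B.2.mem_iff_forall_not_disjoint.symm

end SemilatticeInf

theorem IsPseudocomplemented.extremallyDisconnected {L : Type*} [CompleteLattice L]
    (hL : IsPseudocomplemented L) : ExtremallyDisconnected (Quasipoint L) := by
  refine ⟨fun U hU => ?_⟩
  obtain ⟨K, V, rfl, hV⟩ := isTopologicalBasis_range_Qset.open_eq_iUnion hU
  choose a ha using hV
  simp only [← ha, hL.closure_iUnion_Qset isLUB_iSup, isOpen_Qset]

theorem stoneSpectrum_extremallyDisconnected_of_completelyDistrib_general
    {L : Type*} [CompleteLattice L] (hL : IsPseudocomplemented L) :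
    (∀ {K : Type*} (a : K → L),
      closure (⋃ k, Qset (a k)) = Qset (⨆ k, a k)) ∧
    ExtremallyDisconnected (Quasipoint L) :=
  ⟨fun _ => hL.closure_iUnion_Qset isLUB_iSup, hL.extremallyDisconnected⟩

/-- If `L` is a completely distributive (complete) lattice, then for every family `(a k)` in `L`
the closure of `⋃ k, Qset (a k)` in the Stone spectrum equals `Qset (⨆ k, a k)`; consequently
the Stone spectrum of `L` is extremally disconnected. -/
theorem stoneSpectrum_extremallyDisconnected_of_completelyDistrib
    {L : Type*} [CompletelyDistribLattice L] :
    (∀ {K : Type*} (a : K → L),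
      closure (⋃ k, Qset (a k)) = Qset (⨆ k, a k)) ∧
    ExtremallyDisconnected (Quasipoint L) :=
  stoneSpectrum_extremallyDisconnected_of_completelyDistrib_general
    (isPseudocomplemented_of_heytingAlgebra L)
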